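/- Half-period product identity (formula (n6a)): Let τ lie in the complex upper half-plane and let u ∈ ℂ be such that θ₁(u,τ)·θ₄(u,τ) ≠ 0 and θ₁(u+1/2,τ)·θ₄(u+1/2,τ) ≠ 0. Then S'(u,τ)·S'(u + 1/2, τ) = −π² θ₄(0,τ)⁴. -/

import Mathlib

open Complex

/-- Jacobi theta function θ₁(u,τ). -/
noncomputable def theta1 (u τ : ℂ) : ℂ :=
  -∑' k : ℤ, Complex.exp ((Real.pi : ℂ) * Complex.I * τ * ((k : ℂ) + 1/2)^2
      + 2 * (Real.pi : ℂ) * Complex.I * (u + 1/2) * ((k : ℂ) + 1/2))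

/-- Jacobi theta function θ₂(u,τ). -/
noncomputable def theta2 (u τ : ℂ) : ℂ :=
  ∑' k : ℤ, Complex.exp ((Real.pi : ℂ) * Complex.I * τ * ((k : ℂ) + 1/2)^2
      + 2 * (Real.pi : ℂ) * Complex.I * u * ((k : ℂ) + 1/2))

/-- Jacobi theta function θ₃(u,τ). -/
noncomputable def theta3 (u τ : ℂ) : ℂ :=
  ∑' k : ℤ, Complex.exp ((Real.pi : ℂ) * Complex.I * τ * (k : ℂ)^2
      + 2 * (Real.pi : ℂ) * Complex.I * u * (k : ℂ))

/-- Jacobi theta function θ₄(u,τ). -/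
noncomputable def theta4 (u τ : ℂ) : ℂ :=
  ∑' k : ℤ, Complex.exp ((Real.pi : ℂ) * Complex.I * τ * (k : ℂ)^2
      + 2 * (Real.pi : ℂ) * Complex.I * (u + 1/2) * (k : ℂ))

/-- ζ_a(u,τ) = θ_a'(u,τ)/θ_a(u,τ). -/
noncomputable def zeta1 (u τ : ℂ) : ℂ := deriv (fun v => theta1 v τ) u / theta1 u τ
noncomputable def zeta2 (u τ : ℂ) : ℂ := deriv (fun v => theta2 v τ) u / theta2 u τ
noncomputable def zeta3 (u τ : ℂ) : ℂ := deriv (fun v => theta3 v τ) u / theta3 u τ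
noncomputable def zeta4 (u τ : ℂ) : ℂ := deriv (fun v => theta4 v τ) u / theta4 u τ

/-- ℘_a(u,τ) = −∂_u ζ_a(u,τ). -/
noncomputable def wp1 (u τ : ℂ) : ℂ := -deriv (fun v => zeta1 v τ) u
noncomputable def wp2 (u τ : ℂ) : ℂ := -deriv (fun v => zeta2 v τ) u
noncomputable def wp1' (u τ : ℂ) : ℂ := deriv (fun v => wp1 v τ) u
noncomputable def wp2' (u τ : ℂ) : ℂ := deriv (fun v => wp2 v τ) u

/-- S'(u,τ) = ζ₁(u,τ) − ζ₄(u,τ). -/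
noncomputable def Sp (u τ : ℂ) : ℂ := zeta1 u τ - zeta4 u τ
/-- S''(u,τ) = ∂_u S'(u,τ). -/
noncomputable def Spp (u τ : ℂ) : ℂ := deriv (fun v => Sp v τ) u
/-- S'''(u,τ) = ∂_u S''(u,τ). -/
noncomputable def Sppp (u τ : ℂ) : ℂ := deriv (fun v => Spp v τ) u

/-- Partial derivative in the j-th coordinate of a ℂ-valued function on ℝ^N. -/
noncomputable def pdC {N : ℕ} (j : Fin N) (f : (Fin N → ℝ) → ℂ) (x : Fin N → ℝ) : ℂ :=
  fderiv ℝ f x (Pi.single j 1)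

/-- Partial derivative in the j-th coordinate of an ℝ-valued function on ℝ^d. -/
noncomputable def pd {d : ℕ} (j : Fin d) (f : (Fin d → ℝ) → ℝ) (x : Fin d → ℝ) : ℝ :=
  fderiv ℝ f x (Pi.single j 1)


def splitEquiv : (ℤ × ℤ) ⊕ (ℤ × ℤ) ≃ ℤ × ℤ where
  toFun := Sum.elim (fun p => (p.1 + p.2, p.1 - p.2)) (fun p => (p.1 + p.2 + 1, p.1 - p.2))
  invFun p := if (p.1 + p.2) % 2 = 0 then Sum.inl ((p.1 + p.2) / 2, (p.1 - p.2) / 2)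
    else Sum.inr ((p.1 + p.2 - 1) / 2, (p.1 - p.2 - 1) / 2)
  left_inv := by
    rintro (⟨p, q⟩ | ⟨p, q⟩)
    · have : (p + q + (p - q)) % 2 = 0 := by omega
      simp only [Sum.elim_inl, this, if_true, Sum.inl.injEq, Prod.mk.injEq]
      omega
    · have : ¬ (p + q + 1 + (p - q)) % 2 = 0 := by omega
      simp only [Sum.elim_inr, this, if_false, Sum.inr.injEq, Prod.mk.injEq]
      omega
  right_inv := by
    rintro ⟨a, b⟩
    by_cases h : (a + b) % 2 = 0
    · simp only [h, if_true, Sum.elim_inl, Prod.mk.injEq]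
      omega
    · simp only [h, if_false, Sum.elim_inr, Prod.mk.injEq]
      omega

lemma theta_prod (x y τ : ℂ) (hτ : 0 < τ.im) :
    jacobiTheta₂ x τ * jacobiTheta₂ y τ =
      jacobiTheta₂ (x + y) (2 * τ) * jacobiTheta₂ (x - y) (2 * τ) +
      cexp (Real.pi * I * τ + 2 * Real.pi * I * x) *
        (jacobiTheta₂ (x + y + τ) (2 * τ) * jacobiTheta₂ (x - y + τ) (2 * τ)) := by
  have h2 : 0 < (2 * τ).im := by simp [hτ]
  have S : ∀ z t : ℂ, 0 < t.im → Summable fun n => ‖jacobiTheta₂_term n z t‖ := fun z t ht =>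
    ((summable_jacobiTheta₂_term_iff z t).2 ht).norm
  have P : ∀ z w t : ℂ, 0 < t.im → HasSum
      (fun p : ℤ × ℤ => jacobiTheta₂_term p.1 z t * jacobiTheta₂_term p.2 w t)
      (jacobiTheta₂ z t * jacobiTheta₂ w t) := by
    intro z w t ht
    have := (summable_mul_of_summable_norm (S z t ht) (S w t ht)).hasSum
    rwa [← tsum_mul_tsum_of_summable_norm (S z t ht) (S w t ht)] at this
  have A := P x y τ hτ
  rw [← splitEquiv.hasSum_iff] at A
  refine A.unique (HasSum.sum ?_ ?_)
  · convert P (x + y) (x - y) (2 * τ) h2 using 2 with p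
    simp only [Function.comp, splitEquiv, Equiv.coe_fn_mk, Sum.elim_inl, jacobiTheta₂_term,
      ← Complex.exp_add]
    congr 1
    push_cast
    ring
  · refine Eq.mp (congrArg (fun f => HasSum f _) (funext fun p => Eq.symm ?_)) ((P (x + y + τ) (x - y + τ) (2 * τ) h2).mul_left
      (cexp (Real.pi * I * τ + 2 * Real.pi * I * x)))
    simp only [Function.comp, splitEquiv, Equiv.coe_fn_mk, Sum.elim_inr, jacobiTheta₂_term,
      ← Complex.exp_add]
    congr 1
    push_cast
    ring

lemma th3 (u τ : ℂ) : theta3 u τ = jacobiTheta₂ u τ := by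
  simp only [theta3, jacobiTheta₂, jacobiTheta₂_term]
  exact tsum_congr fun k => by congr 1; ring
lemma th4 (u τ : ℂ) : theta4 u τ = jacobiTheta₂ (u + 1 / 2) τ := by
  simp only [theta4, jacobiTheta₂, jacobiTheta₂_term]
  exact tsum_congr fun k => by congr 1; ring
lemma th2 (u τ : ℂ) : theta2 u τ =
    cexp (Real.pi * I * τ / 4 + Real.pi * I * u) * jacobiTheta₂ (u + τ / 2) τ := by
  simp only [theta2, jacobiTheta₂, jacobiTheta₂_term, ← tsum_mul_left, ← Complex.exp_add]
  exact tsum_congr fun k => by congr 1; ring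
lemma th1 (u τ : ℂ) : theta1 u τ = -theta2 (u + 1 / 2) τ := rfl

lemma th2_half (u τ : ℂ) : theta2 (u + 1 / 2) τ = -theta1 u τ := by simp [th1]
lemma th4_half (u τ : ℂ) : theta4 (u + 1 / 2) τ = theta3 u τ := by
  rw [th4, th3, ← jacobiTheta₂_add_left u]; ring_nf
lemma th3_half (u τ : ℂ) : theta3 (u + 1 / 2) τ = theta4 u τ := by
  rw [th4, th3]
lemma th1_half (u τ : ℂ) : theta1 (u + 1 / 2) τ = theta2 u τ := by
  rw [th1, th2, th2, show u + 1 / 2 + 1 / 2 + τ / 2 = u + τ / 2 + 1 by ring,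
    jacobiTheta₂_add_left, show Real.pi * I * τ / 4 + Real.pi * I * (u + 1 / 2 + 1 / 2) =
     (Real.pi * I * τ / 4 + Real.pi * I * u) + Real.pi * I by ring, Complex.exp_add _ (Real.pi * I),
     Complex.exp_pi_mul_I]
  ring

noncomputable def GG (τ x : ℂ) : ℂ := cexp (Real.pi * I * x) * jacobiTheta₂ (2 * x + τ / 2) (2 * τ)

lemma GG_neg (τ x : ℂ) : cexp (3 * (Real.pi * I * x)) * jacobiTheta₂ (2 * x + 3 * τ / 2) (2 * τ)
    = cexp (-(Real.pi * I * τ)) * GG τ (-x) := by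
  rw [GG, show 2 * x + 3 * τ / 2 = (2 * x - τ / 2) + 2 * τ by ring, jacobiTheta₂_add_left',
    show 2 * -x + τ / 2 = -(2 * x - τ / 2) by ring, jacobiTheta₂_neg_left,
    ← mul_assoc, ← mul_assoc (cexp (-(Real.pi * I * τ))), ← Complex.exp_add, ← Complex.exp_add]
  congr 2
  ring

lemma th23 (u s τ : ℂ) (hτ : 0 < τ.im) : theta2 (u + s) τ * theta3 (u - s) τ =
    cexp (Real.pi * I * τ / 4) * (GG τ u * GG τ s + GG τ (-u) * GG τ (-s)) := by
  have e1 := GG_neg τ u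
  have e2 := GG_neg τ s
  have E : cexp (-(Real.pi * I * τ)) * cexp (Real.pi * I * τ) = 1 := by
    rw [← Complex.exp_add]; simp
  have f1 : GG τ (-u) = cexp (Real.pi * I * τ) * (cexp (3 * (Real.pi * I * u)) * jacobiTheta₂ (2 * u + 3 * τ / 2) (2 * τ)) := by
    rw [e1]; linear_combination - E * GG τ (-u)
  have f2 : GG τ (-s) = cexp (Real.pi * I * τ) * (cexp (3 * (Real.pi * I * s)) * jacobiTheta₂ (2 * s + 3 * τ / 2) (2 * τ)) := by
    rw [e2]; linear_combination - E * GG τ (-s)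
  rw [f1, f2, th2, th3, mul_assoc, theta_prod _ _ _ hτ, GG, GG, mul_add (cexp _), mul_add (cexp _)]
  refine congrArg₂ (· + ·) ?_ ?_
  · rw [show u + s + τ / 2 + (u - s) = 2 * u + τ / 2 by ring,
      show u + s + τ / 2 - (u - s) = 2 * s + τ / 2 by ring,
      show Real.pi * I * τ / 4 + Real.pi * I * (u + s) =
        Real.pi * I * τ / 4 + (Real.pi * I * u + Real.pi * I * s) by ring,
      Complex.exp_add, Complex.exp_add]
    ring
  · rw [show u + s + τ / 2 + (u - s) + τ = 2 * u + 3 * τ / 2 by ring,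
      show u + s + τ / 2 - (u - s) + τ = 2 * s + 3 * τ / 2 by ring]
    have : cexp (Real.pi * I * τ / 4 + Real.pi * I * (u + s)) *
        cexp (Real.pi * I * τ + 2 * Real.pi * I * (u + s + τ / 2)) =
        cexp (Real.pi * I * τ / 4) * (cexp (Real.pi * I * τ) * cexp (3 * (Real.pi * I * u)) *
         (cexp (Real.pi * I * τ) * cexp (3 * (Real.pi * I * s)))) := by
      simp only [← Complex.exp_add]
      congr 1; ring
    linear_combination (jacobiTheta₂ (2 * u + 3 * τ / 2) (2 * τ) * jacobiTheta₂ (2 * s + 3 * τ / 2) (2 * τ)) * this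

lemma GG_half (τ x : ℂ) : GG τ (x + 1 / 2) = I * GG τ x := by
  rw [GG, GG, show 2 * (x + 1 / 2) + τ / 2 = 2 * x + τ / 2 + 1 by ring, jacobiTheta₂_add_left,
    mul_add, Complex.exp_add, show (Real.pi : ℂ) * I * (1 / 2) = Real.pi / 2 * I by ring,
    Complex.exp_pi_div_two_mul_I]
  ring
lemma GG_half' (τ x : ℂ) : GG τ (-(x + 1 / 2)) = -I * GG τ (-x) := by
  have := GG_half τ (-(x + 1 / 2))
  rw [show -(x + 1 / 2) + 1 / 2 = -x by ring] at this
  rw [this, ← mul_assoc]; simp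

lemma th14 (u s τ : ℂ) (hτ : 0 < τ.im) : theta1 (u + s) τ * theta4 (u - s) τ =
    -I * cexp (Real.pi * I * τ / 4) * (GG τ u * GG τ s - GG τ (-u) * GG τ (-s)) := by
  have := th23 (u + 1 / 2) s τ hτ
  rw [show u + 1 / 2 + s = u + s + 1 / 2 by ring, show u + 1 / 2 - s = u - s + 1 / 2 by ring,
    th2_half, th3_half, GG_half, GG_half'] at this
  linear_combination -this

lemma dJ (τ : ℂ) (hτ : 0 < τ.im) : Differentiable ℂ (fun z => jacobiTheta₂ z τ) :=
  fun z => differentiableAt_jacobiTheta₂_fst z hτ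
lemma dGG (τ : ℂ) (hτ : 0 < τ.im) : Differentiable ℂ (GG τ) := by
  have h2 : 0 < (2 * τ).im := by simp [hτ]
  have : Differentiable ℂ (fun x : ℂ => jacobiTheta₂ (2 * x + τ / 2) (2 * τ)) :=
    (dJ _ h2).comp (f := fun x : ℂ => 2 * x + τ / 2) (by fun_prop)
  unfold GG
  fun_prop
lemma d2 (τ : ℂ) (hτ : 0 < τ.im) : Differentiable ℂ (fun v => theta2 v τ) := by
  have : Differentiable ℂ (fun x : ℂ => jacobiTheta₂ (x + τ / 2) τ) :=
    (dJ _ hτ).comp (f := fun x : ℂ => x + τ / 2) (by fun_prop)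
  simp only [th2]
  fun_prop
lemma d1 (τ : ℂ) (hτ : 0 < τ.im) : Differentiable ℂ (fun v => theta1 v τ) := by
  simp only [th1]
  exact ((d2 τ hτ).comp (f := fun x : ℂ => x + 1 / 2) (by fun_prop)).neg
lemma d4 (τ : ℂ) (hτ : 0 < τ.im) : Differentiable ℂ (fun v => theta4 v τ) := by
  simp only [th4]
  exact (dJ _ hτ).comp (f := fun x : ℂ => x + 1 / 2) (by fun_prop)

/-- Wronskian. -/
lemma wronsk (u τ : ℂ) (hτ : 0 < τ.im) :
    deriv (fun v => theta1 v τ) u * theta4 u τ - theta1 u τ * deriv (fun v => theta4 v τ) u =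
    -I * cexp (Real.pi * I * τ / 4) * (deriv (GG τ) 0 * (GG τ u + GG τ (-u))) := by
  have a1 : HasDerivAt (fun s => theta1 (u + s) τ) (deriv (fun v => theta1 v τ) u) 0 := by
    have := (d1 τ hτ (u + 0)).hasDerivAt.comp_const_add u 0
    simpa using this
  have a4 : HasDerivAt (fun s => theta4 (u - s) τ) (-deriv (fun v => theta4 v τ) u) 0 := by
    have := (d4 τ hτ (u - 0)).hasDerivAt.comp_const_sub u 0
    simpa using this
  have g1 : HasDerivAt (GG τ) (deriv (GG τ) 0) 0 := (dGG τ hτ 0).hasDerivAt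
  have g2 : HasDerivAt (fun s => GG τ (-s)) (-deriv (GG τ) 0) 0 := by
    have := (dGG τ hτ (0 - 0)).hasDerivAt.comp_const_sub 0 0
    simpa using this
  have L := a1.mul a4
  have R := ((g1.const_mul (GG τ u)).sub (g2.const_mul (GG τ (-u)))).const_mul
    (-I * cexp (Real.pi * I * τ / 4))
  have := L.unique (R.congr_of_eventuallyEq (Filter.Eventually.of_forall fun s => th14 u s τ hτ))
  simp only [add_zero, sub_zero] at this
  linear_combination this

lemma th2_sq (τ : ℂ) (hτ : 0 < τ.im) :
    theta2 0 τ ^ 2 = 2 * theta2 0 (2 * τ) * theta3 0 (2 * τ) := by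
  have h := theta_prod (τ / 2) (τ / 2) τ hτ
  have h' := jacobiTheta₂_add_left' 0 (2 * τ)
  rw [show τ / 2 + τ / 2 + τ = 0 + 2 * τ by ring, show τ / 2 + τ / 2 = τ by ring, sub_self,
    h', zero_add] at h
  rw [th2, th2, th3]
  simp only [zero_add, mul_zero, add_zero]
  have E : cexp (Real.pi * I * τ + 2 * Real.pi * I * (τ / 2)) * cexp (-Real.pi * I * (2 * τ + 2 * 0)) = 1 := by
    rw [← Complex.exp_add, ← Complex.exp_zero]; congr 1; ring
  have E2 : cexp (Real.pi * I * τ / 4) ^ 2 = cexp (Real.pi * I * (2 * τ) / 4) := by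
    rw [← Complex.exp_nat_mul]; congr 1; push_cast; ring
  rw [show 2 * τ / 2 = τ by ring, ← E2]
  simp only [mul_zero, add_zero] at E h
  linear_combination (cexp (Real.pi * I * τ / 4) ^ 2) * h + (cexp (Real.pi * I * τ / 4) ^ 2) *
    jacobiTheta₂ 0 (2 * τ) * jacobiTheta₂ τ (2 * τ) * E

lemma J_zero (τ : ℂ) : jacobiTheta₂ (1 / 2 + τ) (2 * τ) = 0 := by
  have h := jacobiTheta₂_add_left' (1 / 2 - τ) (2 * τ)
  rw [show 1 / 2 - τ + 2 * τ = 1 / 2 + τ by ring,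
    show -Real.pi * I * (2 * τ + 2 * (1 / 2 - τ)) = -(Real.pi * I) by ring, Complex.exp_neg,
    Complex.exp_pi_mul_I, ← jacobiTheta₂_neg_left (1 / 2 - τ), ← jacobiTheta₂_add_left (-(1 / 2 - τ)),
    show -(1 / 2 - τ) + 1 = 1 / 2 + τ by ring] at h
  have : (2 : ℂ) * jacobiTheta₂ (1 / 2 + τ) (2 * τ) = 0 := by
    linear_combination h
  simpa using this

lemma th34 (τ : ℂ) (hτ : 0 < τ.im) : theta3 0 τ * theta4 0 τ = theta4 0 (2 * τ) ^ 2 := by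
  rw [th3, th4, th4, mul_comm, zero_add, theta_prod _ _ _ hτ, add_zero, sub_zero, J_zero]
  ring

lemma th12 (u τ : ℂ) (hτ : 0 < τ.im) :
    theta1 u τ * theta2 u τ = theta1 (2 * u) (2 * τ) * theta4 0 (2 * τ) := by
  have h := theta_prod (u + 1 / 2 + τ / 2) (u + τ / 2) τ hτ
  rw [show u + 1 / 2 + τ / 2 - (u + τ / 2) = 1 / 2 by ring, J_zero] at h
  rw [th1, th1, th2, th2, th2, th4, zero_add,
    show 2 * u + 1 / 2 + 2 * τ / 2 = u + 1 / 2 + τ / 2 + (u + τ / 2) by ring,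
    show Real.pi * I * (2 * τ) / 4 + Real.pi * I * (2 * u + 1 / 2) =
     (Real.pi * I * τ / 4 + Real.pi * I * (u + 1 / 2)) + (Real.pi * I * τ / 4 + Real.pi * I * u) by ring,
     Complex.exp_add (Real.pi * I * τ / 4 + Real.pi * I * (u + 1 / 2))]
  linear_combination (-cexp (Real.pi * I * τ / 4 + Real.pi * I * (u + 1 / 2)) * cexp (Real.pi * I * τ / 4 + Real.pi * I * u)) * h

lemma th1_zero (τ : ℂ) : theta1 0 τ = 0 := by
  have h := J_zero (τ / 2)
  rw [show 2 * (τ / 2) = τ by ring] at h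
  rw [th1, th2, zero_add, h]; simp

noncomputable def NN (τ : ℂ) : ℂ := deriv (fun v => theta1 v τ) 0
noncomputable def MM (τ : ℂ) : ℂ := Real.pi * theta2 0 τ * theta3 0 τ * theta4 0 τ

lemma NN_step (τ : ℂ) (hτ : 0 < τ.im) :
    NN τ * theta2 0 τ = NN (2 * τ) * (2 * theta4 0 (2 * τ)) := by
  have h2 : 0 < (2 * τ).im := by simp [hτ]
  have L := (d1 τ hτ 0).hasDerivAt.mul (d2 τ hτ 0).hasDerivAt
  have R : HasDerivAt (fun u => theta1 (2 * u) (2 * τ) * theta4 0 (2 * τ))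
      (NN (2 * τ) * 2 * theta4 0 (2 * τ)) 0 := by
    have a : HasDerivAt (fun v => theta1 v (2 * τ)) (NN (2 * τ)) (2 * 0) := by
      rw [mul_zero]; exact (d1 _ h2 0).hasDerivAt
    have b : HasDerivAt (fun u : ℂ => 2 * u) 2 0 := by
      simpa using (hasDerivAt_id (0 : ℂ)).const_mul 2
    exact (a.comp 0 b).mul_const _
  have := L.unique (R.congr_of_eventuallyEq (Filter.Eventually.of_forall fun s => th12 s τ hτ))
  simp only [th1_zero τ, zero_mul, add_zero] at this
  rw [NN, this]; ring

lemma MM_step (τ : ℂ) (hτ : 0 < τ.im) :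
    MM τ * theta2 0 τ = MM (2 * τ) * (2 * theta4 0 (2 * τ)) := by
  rw [MM, MM]
  linear_combination (Real.pi * theta2 0 τ ^ 2) * th34 τ hτ +
    (Real.pi * theta4 0 (2 * τ) ^ 2) * th2_sq τ hτ

lemma lim_aux (τ : ℂ) (hτ : 0 < τ.im) (c : ℤ → ℂ) (e : ℤ → ℕ)
    (hs : Summable fun k => ‖c k * cexp (Real.pi * I * τ * e k)‖) :
    Filter.Tendsto (fun n : ℕ => ∑' k, c k * cexp (Real.pi * I * (2 ^ n * τ) * e k)) Filter.atTop
      (nhds (∑' k, if e k = 0 then c k else 0)) := by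
  have hre : ∀ (n : ℕ) k, (Real.pi * I * (2 ^ n * τ) * e k).re = -(Real.pi * τ.im * e k) * 2 ^ n := by
    intro n k
    have : (Real.pi * I * (2 ^ n * τ) * e k : ℂ) = ((Real.pi * e k * 2 ^ n : ℝ) : ℂ) * (I * τ) := by
      push_cast; ring
    rw [this, Complex.re_ofReal_mul]
    simp
    ring
  refine tendsto_tsum_of_dominated_convergence hs ?_ ?_
  · intro k
    split_ifs with h
    · simp [h]
    · have hk : 0 < Real.pi * τ.im * e k := by
        have : (0 : ℝ) < e k := by exact_mod_cast Nat.pos_of_ne_zero h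
        have := Real.pi_pos
        positivity
      rw [← mul_zero (c k)]
      refine Filter.Tendsto.const_mul _ ?_
      rw [tendsto_zero_iff_norm_tendsto_zero]
      simp only [Complex.norm_exp, hre]
      refine Real.tendsto_exp_atBot.comp ?_
      exact (tendsto_pow_atTop_atTop_of_one_lt (by norm_num : (1 : ℝ) < 2)).const_mul_atTop_of_neg
        (by linarith)
  · refine Filter.Eventually.of_forall fun n k => ?_
    rw [norm_mul, norm_mul, Complex.norm_exp, Complex.norm_exp]
    have h0 := hre 0 k
    simp only [pow_zero, one_mul, mul_one] at h0
    rw [hre, h0]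
    have : (0 : ℝ) ≤ Real.pi * τ.im * e k := by
      have := Real.pi_pos
      positivity
    have h1 : (1 : ℝ) ≤ 2 ^ n := one_le_pow₀ (by norm_num)
    gcongr
    nlinarith

/-- `k^2 + k` as a natural number. -/
def ee (k : ℤ) : ℕ := (k ^ 2 + k).toNat
lemma ee_cast (k : ℤ) : (ee k : ℂ) = (k : ℂ) ^ 2 + k := by
  have h : ((ee k : ℕ) : ℤ) = k ^ 2 + k := by
    refine Int.toNat_of_nonneg ?_
    rcases le_or_gt 0 k with h | h
    · positivity
    · nlinarith
  have := congrArg (Int.cast (R := ℂ)) h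
  push_cast at this
  exact this
lemma ee_zero (k : ℤ) : ee k = 0 ↔ k = 0 ∨ k = -1 := by
  constructor
  · intro h
    have h' := ee_cast k
    rw [h] at h'
    have : (0 : ℤ) = k ^ 2 + k := by exact_mod_cast h'
    have : k * (k + 1) = 0 := by linarith
    rcases mul_eq_zero.1 this with h | h
    · exact Or.inl h
    · right; omega
  · rintro (rfl | rfl) <;> simp [ee]

lemma tsum_ee (c : ℤ → ℂ) : (∑' k, if ee k = 0 then c k else 0) = c 0 + c (-1) := by
  rw [tsum_eq_sum (s := {0, -1})]
  · rw [Finset.sum_pair (by norm_num)]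
    simp [ee_zero]
  · intro k hk
    rw [if_neg]
    rw [ee_zero]; simpa using hk

/-- Limit of theta along `2^n τ` at `a + τ/2`. -/
lemma lim_J (a τ : ℂ) (hτ : 0 < τ.im) :
    Filter.Tendsto (fun n : ℕ => jacobiTheta₂ (a + 2 ^ n * τ / 2) (2 ^ n * τ)) Filter.atTop
      (nhds (1 + cexp (-(2 * Real.pi * I * a)))) := by
  have key : ∀ (t : ℂ) (k : ℤ), cexp (2 * Real.pi * I * k * a) * cexp (Real.pi * I * t * ee k)
      = jacobiTheta₂_term k (a + t / 2) t := by
    intro t k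
    rw [jacobiTheta₂_term, ee_cast, ← Complex.exp_add]; congr 1; ring
  have := lim_aux τ hτ (fun k => cexp (2 * Real.pi * I * k * a)) ee (by
    simp only [key]; exact ((summable_jacobiTheta₂_term_iff _ _).2 hτ).norm)
  rw [tsum_ee] at this
  simp only [key] at this
  have e : cexp (2 * Real.pi * I * (0 : ℤ) * a) + cexp (2 * Real.pi * I * (-1 : ℤ) * a) =
      1 + cexp (-(2 * Real.pi * I * a)) := by simp
  rw [e] at this
  exact this

lemma lim_J' (a τ : ℂ) (hτ : 0 < τ.im) :
    Filter.Tendsto (fun n : ℕ => jacobiTheta₂' (a + 2 ^ n * τ / 2) (2 ^ n * τ)) Filter.atTop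
      (nhds (-(2 * Real.pi * I) * cexp (-(2 * Real.pi * I * a)))) := by
  have key : ∀ (t : ℂ) (k : ℤ), (2 * Real.pi * I * k) * cexp (2 * Real.pi * I * k * a) *
      cexp (Real.pi * I * t * ee k) = jacobiTheta₂'_term k (a + t / 2) t := by
    intro t k
    rw [jacobiTheta₂'_term, jacobiTheta₂_term, ee_cast, mul_assoc, ← Complex.exp_add]; congr 2; ring
  have := lim_aux τ hτ (fun k => (2 * Real.pi * I * k) * cexp (2 * Real.pi * I * k * a)) ee (by
    simp only [key]; exact ((summable_jacobiTheta₂'_term_iff _ _).2 hτ).norm)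
  rw [tsum_ee] at this
  simp only [key] at this
  have e : 2 * Real.pi * I * (0 : ℤ) * cexp (2 * Real.pi * I * (0 : ℤ) * a) +
      2 * Real.pi * I * (-1 : ℤ) * cexp (2 * Real.pi * I * (-1 : ℤ) * a) =
      -(2 * Real.pi * I) * cexp (-(2 * Real.pi * I * a)) := by simp
  rw [e] at this
  exact this

lemma lim_J0 (a τ : ℂ) (hτ : 0 < τ.im) :
    Filter.Tendsto (fun n : ℕ => jacobiTheta₂ a (2 ^ n * τ)) Filter.atTop (nhds 1) := by
  have key : ∀ (t : ℂ) (k : ℤ), cexp (2 * Real.pi * I * k * a) *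
      cexp (Real.pi * I * t * (k.natAbs ^ 2 : ℕ)) = jacobiTheta₂_term k a t := by
    intro t k
    have : ((k.natAbs ^ 2 : ℕ) : ℂ) = (k : ℂ) ^ 2 := by
      have := congrArg (Int.cast (R := ℂ)) (Int.natAbs_sq k)
      rw [← Int.cast_pow, ← this, Int.cast_pow, Int.cast_natCast, Nat.cast_pow]
    rw [jacobiTheta₂_term, this, ← Complex.exp_add]; congr 1; ring
  have := lim_aux τ hτ (fun k => cexp (2 * Real.pi * I * k * a)) (fun k => k.natAbs ^ 2) (by
    simp only [key]; exact ((summable_jacobiTheta₂_term_iff _ _).2 hτ).norm)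
  simp only [key] at this
  have e : (∑' k : ℤ, if k.natAbs ^ 2 = 0 then cexp (2 * Real.pi * I * k * a) else 0) = 1 := by
    rw [tsum_eq_single 0]
    · simp
    · intro k hk; simp [hk]
  rw [e] at this
  exact this

lemma NN_eq (τ : ℂ) (hτ : 0 < τ.im) : NN τ = -I * cexp (Real.pi * I * τ / 4) *
    (Real.pi * I * jacobiTheta₂ (1 / 2 + τ / 2) τ + jacobiTheta₂' (1 / 2 + τ / 2) τ) := by
  have a : HasDerivAt (fun v : ℂ => jacobiTheta₂ (v + (1 / 2 + τ / 2)) τ)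
      (jacobiTheta₂' (0 + (1 / 2 + τ / 2)) τ) 0 :=
    (hasDerivAt_jacobiTheta₂_fst (0 + (1 / 2 + τ / 2)) hτ).comp_add_const 0 (1 / 2 + τ / 2)
  have b : HasDerivAt (fun v : ℂ => cexp (Real.pi * I * v)) (Real.pi * I) 0 := by
    have := ((hasDerivAt_id (0 : ℂ)).const_mul (Real.pi * I)).cexp
    simpa using this
  have c := (b.mul a).const_mul (-I * cexp (Real.pi * I * τ / 4))
  have e : (fun v => theta1 v τ) = fun v => -I * cexp (Real.pi * I * τ / 4) *
      (cexp (Real.pi * I * v) * jacobiTheta₂ (v + (1 / 2 + τ / 2)) τ) := by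
    funext v
    rw [th1, th2, Complex.exp_add, mul_add, Complex.exp_add,
      show (Real.pi : ℂ) * I * (1 / 2) = Real.pi / 2 * I by ring,
      Complex.exp_pi_div_two_mul_I, add_assoc]
    ring
  rw [NN, e]
  refine c.deriv.trans ?_
  simp

lemma im_pow (n : ℕ) (τ : ℂ) (hτ : 0 < τ.im) : 0 < (2 ^ n * τ).im := by
  have : (2 ^ n * τ : ℂ) = ((2 ^ n : ℝ) : ℂ) * τ := by push_cast; ring
  rw [this, Complex.im_ofReal_mul]
  positivity

lemma exists_n (τ : ℂ) (hτ : 0 < τ.im) (h0 : theta2 0 τ ≠ 0) :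
    ∃ n : ℕ, NN (2 ^ n * τ) = MM (2 ^ n * τ) := by
  have hpi : (Real.pi : ℂ) ≠ 0 := by exact_mod_cast Real.pi_ne_zero
  have eh : cexp (-(2 * Real.pi * I * (1 / 2))) = -1 := by
    rw [show -(2 * Real.pi * I * (1 / 2)) = -(Real.pi * I) by ring, Complex.exp_neg,
      Complex.exp_pi_mul_I]; norm_num
  -- normalised numerator and denominator
  have l1 := lim_J (1 / 2) τ hτ
  have l2 := lim_J' (1 / 2) τ hτ
  have l3 := lim_J 0 τ hτ
  have l4 := lim_J0 0 τ hτ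
  have l5 := lim_J0 (1 / 2) τ hτ
  rw [eh] at l1 l2
  have hN := ((l1.const_mul (Real.pi * I)).add l2).const_mul (-I)
  have hM := ((l3.const_mul (Real.pi : ℂ)).mul l4).mul l5
  have hM0 : (Real.pi : ℂ) * (1 + cexp (-(2 * Real.pi * I * 0))) * 1 * 1 ≠ 0 := by
    simp
  have hQ := hN.div hM hM0
  have hval : -I * (Real.pi * I * (1 + -1) + -(2 * Real.pi * I) * -1) /
      ((Real.pi : ℂ) * (1 + cexp (-(2 * Real.pi * I * 0))) * 1 * 1) = 1 := by
    rw [div_eq_one_iff_eq hM0]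
    simp
    linear_combination (-2 * Real.pi : ℂ) * Complex.I_mul_I
  rw [hval] at hQ
  have hQ' : Filter.Tendsto (fun n : ℕ => NN (2 ^ n * τ) / MM (2 ^ n * τ)) Filter.atTop (nhds 1) := by
    refine hQ.congr fun n => ?_
    rw [NN_eq _ (im_pow n τ hτ), MM, th2, th3, th4]
    simp only [zero_add, mul_zero, add_zero, Pi.div_apply]
    rw [mul_comm (-I) (cexp _), mul_assoc (cexp _),
      show Real.pi * (cexp (Real.pi * I * (2 ^ n * τ) / 4) * jacobiTheta₂ (2 ^ n * τ / 2) (2 ^ n * τ))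
        * jacobiTheta₂ 0 (2 ^ n * τ) * jacobiTheta₂ (1 / 2) (2 ^ n * τ) =
        cexp (Real.pi * I * (2 ^ n * τ) / 4) * (Real.pi * jacobiTheta₂ (2 ^ n * τ / 2) (2 ^ n * τ)
        * jacobiTheta₂ 0 (2 ^ n * τ) * jacobiTheta₂ (1 / 2) (2 ^ n * τ)) by ring,
      mul_div_mul_left _ _ (Complex.exp_ne_zero _)]
  have hev := (l5.eventually_ne one_ne_zero)
  have hev2 := hQ'.eventually_ne one_ne_zero
  obtain ⟨m, hm⟩ := Filter.eventually_atTop.1 (hev.and hev2)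
  have t2 : ∀ n : ℕ, theta2 0 (2 ^ n * τ) ≠ 0 := by
    intro n
    induction n with
    | zero => simpa using h0
    | succ k ih =>
      have := th2_sq _ (im_pow k τ hτ)
      rw [← mul_assoc, ← pow_succ'] at this
      intro h
      rw [h] at this
      simp at this
      exact ih this
  have step : ∀ n, m ≤ n → NN (2 ^ (n + 1) * τ) / MM (2 ^ (n + 1) * τ)
      = NN (2 ^ n * τ) / MM (2 ^ n * τ) := by
    intro n hn
    have a := NN_step _ (im_pow n τ hτ)
    have b := MM_step _ (im_pow n τ hτ)
    rw [← mul_assoc 2, ← pow_succ'] at a b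
    have h4 : (2 * theta4 0 (2 ^ (n + 1) * τ)) ≠ 0 := by
      rw [th4, zero_add]
      exact mul_ne_zero two_ne_zero (hm (n + 1) (by omega)).1
    rw [← mul_div_mul_right _ _ h4, ← a, ← b, mul_div_mul_right _ _ (t2 n)]
  have const : ∀ n, m ≤ n → NN (2 ^ n * τ) / MM (2 ^ n * τ) = NN (2 ^ m * τ) / MM (2 ^ m * τ) := by
    intro n hn
    induction n, hn using Nat.le_induction with
    | base => rfl
    | succ k hk ih => rw [step k hk, ih]
  have : NN (2 ^ m * τ) / MM (2 ^ m * τ) = 1 := by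
    refine tendsto_nhds_unique ?_ hQ'
    refine tendsto_const_nhds.congr' ?_
    filter_upwards [Filter.eventually_ge_atTop m] with n hn
    exact (const n hn).symm
  exact ⟨m, eq_of_div_eq_one this⟩

lemma descend (n : ℕ) : ∀ (τ : ℂ), 0 < τ.im → theta2 0 τ ≠ 0 → NN (2 ^ n * τ) = MM (2 ^ n * τ) →
    NN τ = MM τ := by
  induction n with
  | zero => intro τ _ _ h; simpa using h
  | succ k ih =>
    intro τ hτ h0 h
    have h2 : 0 < (2 * τ).im := by simp [hτ]
    have := ih (2 * τ) h2 (by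
      intro h
      have h' := th2_sq τ hτ
      rw [h] at h'
      simp at h'
      exact h0 h') (by rw [← mul_assoc, ← pow_succ]; exact h)
    refine mul_right_cancel₀ h0 ?_
    rw [NN_step τ hτ, MM_step τ hτ, this]

lemma jacobi_deriv (τ : ℂ) (hτ : 0 < τ.im) (h0 : theta2 0 τ ≠ 0) : NN τ = MM τ := by
  obtain ⟨n, hn⟩ := exists_n τ hτ h0
  exact descend n τ hτ h0 hn

lemma wronsk' (u τ : ℂ) (hτ : 0 < τ.im) (h : theta2 u τ * theta3 u τ ≠ 0) (v : ℂ) :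
    deriv (fun v => theta1 v τ) v * theta4 v τ - theta1 v τ * deriv (fun v => theta4 v τ) v =
      Real.pi * theta4 0 τ ^ 2 * (theta2 v τ * theta3 v τ) := by
  have P : ∀ v, theta2 v τ * theta3 v τ =
      cexp (Real.pi * I * τ / 4) * (GG τ 0 * (GG τ v + GG τ (-v))) := by
    intro v
    have := th23 v 0 τ hτ
    simp only [add_zero, sub_zero, neg_zero] at this
    rw [this]; ring
  have hG : GG τ 0 ≠ 0 := by
    intro h'
    apply h
    rw [P, h']; simp
  have P0 := P 0
  simp only [neg_zero] at P0
  have h00 : theta2 0 τ * theta3 0 τ ≠ 0 := by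
    rw [P0, ← two_mul]
    exact mul_ne_zero (Complex.exp_ne_zero _) (mul_ne_zero hG (mul_ne_zero two_ne_zero hG))
  have J := jacobi_deriv τ hτ (left_ne_zero_of_mul h00)
  have W0 := wronsk 0 τ hτ
  rw [th1_zero, zero_mul, sub_zero] at W0
  change NN τ * _ = _ at W0
  rw [J, MM, neg_zero] at W0
  have E := Complex.exp_ne_zero (Real.pi * I * τ / 4)
  have key : Real.pi * theta4 0 τ ^ 2 * GG τ 0 = -I * deriv (GG τ) 0 := by
    have : (2 * cexp (Real.pi * I * τ / 4) * GG τ 0) * (Real.pi * theta4 0 τ ^ 2 * GG τ 0)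
        = (2 * cexp (Real.pi * I * τ / 4) * GG τ 0) * (-I * deriv (GG τ) 0) := by
      linear_combination W0 - (Real.pi * theta4 0 τ ^ 2) * P0
    exact mul_left_cancel₀ (mul_ne_zero (mul_ne_zero two_ne_zero E) hG) this
  rw [wronsk v τ hτ, P]
  linear_combination (-cexp (Real.pi * I * τ / 4) * (GG τ v + GG τ (-v))) * key

lemma Sp_eq (v τ : ℂ) (h1 : theta1 v τ * theta4 v τ ≠ 0) :
    Sp v τ = (deriv (fun v => theta1 v τ) v * theta4 v τ -
      theta1 v τ * deriv (fun v => theta4 v τ) v) / (theta1 v τ * theta4 v τ) := by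
  rw [Sp, zeta1, zeta4, div_sub_div _ _ (left_ne_zero_of_mul h1) (right_ne_zero_of_mul h1)]

/-- Half-period product identity (formula (n6a)): S'(u,τ)·S'(u+1/2,τ) = −π²θ₄(0,τ)⁴. -/
theorem Sp_half_period_product (τ u : ℂ) (hτ : 0 < τ.im)
    (h1 : theta1 u τ * theta4 u τ ≠ 0)
    (h2 : theta1 (u + 1 / 2) τ * theta4 (u + 1 / 2) τ ≠ 0) :
    Sp u τ * Sp (u + 1 / 2) τ = -(Real.pi : ℂ) ^ 2 * theta4 0 τ ^ 4 := by

  have h3 : theta2 u τ * theta3 u τ ≠ 0 := by rwa [th1_half, th4_half] at h2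
  rw [Sp_eq u τ h1, Sp_eq (u + 1 / 2) τ h2, wronsk' u τ hτ h3, wronsk' u τ hτ h3,
    th1_half, th4_half, th2_half, th3_half, div_mul_div_comm, div_eq_iff (mul_ne_zero h1 h3)]
  ring
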